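/- arXiv:1606.09010 — 4 statements merged into one kernel-verified Lean document; each statement's English description precedes it below -/
import Mathlib

section
/- Let n ≥ 1, let ι : Λ_n → Λ̃ be a primitive isometric embedding of the generalized Kummer lattice into the Mukai lattice, let v be a generator of the rank-1 orthogonal complement ι(Λ_n)^⊥, and let α ∈ Λ_n be primitive isotropic with d = Div(α). Then there exists an integer b with gcd(d,b) = 1 such that ι(α) − b·v ∈ d·Λ̃, i.e. (ι(α) − b·v)/d is an integral element of the Mukai lattice. -/
/-- The Beauville–Bogomolov form of the generalized Kummer lattice
`Λ_n = U^{⊕3} ⊕ ⟨-(2n+2)⟩`, as a bilinear form on `ℤ⁷`. -/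
def kummerForm (n : ℕ) (x y : Fin 7 → ℤ) : ℤ :=
  x 0 * y 1 + x 1 * y 0 + x 2 * y 3 + x 3 * y 2 + x 4 * y 5 + x 5 * y 4
    - (2 * (n : ℤ) + 2) * (x 6 * y 6)

/-- The Mukai form of the Mukai lattice `Λ̃ = U^{⊕4}`, as a bilinear form on `ℤ⁸`. -/
def mukaiForm (x y : Fin 8 → ℤ) : ℤ :=
  x 0 * y 1 + x 1 * y 0 + x 2 * y 3 + x 3 * y 2 + x 4 * y 5 + x 5 * y 4
    + x 6 * y 7 + x 7 * y 6

/-- An element of `ℤ^m` is primitive if the gcd of its coordinates is `1`. -/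
def IsPrimitive {m : ℕ} (x : Fin m → ℤ) : Prop :=
  Finset.univ.gcd x = 1

/-- `d` is the divisibility `Div(x)` of `x` with respect to the bilinear form `B`,
i.e. the positive generator of the ideal `{B x y : y}` of `ℤ`. -/
def IsDivisibility {m : ℕ} (B : (Fin m → ℤ) → (Fin m → ℤ) → ℤ)
    (x : Fin m → ℤ) (d : ℤ) : Prop :=
  0 < d ∧ (∀ y, d ∣ B x y) ∧ ∀ e : ℤ, (∀ y, e ∣ B x y) → e ∣ d

/-- `ι : Λ_n → Λ̃` is a primitive isometric embedding. -/
def IsPrimitiveIsometricEmbedding (n : ℕ)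
    (ι : (Fin 7 → ℤ) →ₗ[ℤ] (Fin 8 → ℤ)) : Prop :=
  Function.Injective ι ∧ (∀ x y, mukaiForm (ι x) (ι y) = kummerForm n x y) ∧
    ∀ (k : ℤ) (x : Fin 8 → ℤ), k ≠ 0 → k • x ∈ LinearMap.range ι →
      x ∈ LinearMap.range ι

/-!
Since `Λ̃` is unimodular and `ι` splits, every functional on `Λ_n` has the form `y ↦ (w, ι y)`.
Apply this to the functional `y ↦ (α, y) / d`: the resulting `w` makes `ι α - d w` orthogonal to
`ι(Λ_n)`, so `ι α = b v + d w` for some `b`. A common divisor of `b` and `d` divides `ι α`, hence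
divides `α` because `ι` splits, so it is a unit because `α` is primitive.
-/

section Splitting

variable {R L M : Type*} [CommRing R] [AddCommGroup L] [Module R L] [AddCommGroup M] [Module R M]

theorem exists_smul_eq_of_forall_dvd [Module.Projective R L] {d : R} {f : Module.Dual R L}
    (hf : ∀ y, d ∣ f y) : ∃ φ : Module.Dual R L, d • φ = f := by
  let mulD : R →ₗ[R] R := LinearMap.toSpanSingleton R R d
  have mem_range (y : L) : f y ∈ LinearMap.range mulD := by
    obtain ⟨c, hc⟩ := hf y
    exact ⟨c, by rw [hc, LinearMap.toSpanSingleton_apply, smul_eq_mul, mul_comm]⟩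
  obtain ⟨φ, hφ⟩ := Module.projective_lifting_property mulD.rangeRestrict
    (f.codRestrict _ mem_range) mulD.surjective_rangeRestrict
  refine ⟨φ, LinearMap.ext fun y => ?_⟩
  have hφy : φ y * d = f y := congrArg Subtype.val (LinearMap.congr_fun hφ y)
  rw [LinearMap.smul_apply, smul_eq_mul, mul_comm, hφy]

theorem exists_map_sub_smul_eq_zero [Module.Projective R L] {D : M →ₗ[R] Module.Dual R L}
    (hD : Function.Surjective D) {d : R} {x : M} (hx : ∀ y, d ∣ D x y) :
    ∃ w, D (x - d • w) = 0 := by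
  obtain ⟨φ, hφ⟩ := exists_smul_eq_of_forall_dvd hx
  obtain ⟨w, rfl⟩ := hD φ
  exact ⟨w, by rw [map_sub, map_smul, hφ, sub_self]⟩

theorem dualMap_surjective_of_comp_eq_id {ι : L →ₗ[R] M} {r : M →ₗ[R] L}
    (hr : r ∘ₗ ι = LinearMap.id) : Function.Surjective ι.dualMap := fun f =>
  ⟨f ∘ₗ r, by rw [LinearMap.dualMap_apply', LinearMap.comp_assoc, hr, LinearMap.comp_id]⟩

theorem exists_comp_eq_id_of_saturated [IsDomain R] [IsPrincipalIdealRing R] [Module.Finite R M]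
    {ι : L →ₗ[R] M} (hinj : Function.Injective ι)
    (hsat : ∀ (k : R) (x : M), k ≠ 0 → k • x ∈ LinearMap.range ι → x ∈ LinearMap.range ι) :
    ∃ r : M →ₗ[R] L, r ∘ₗ ι = LinearMap.id := by
  have torsionFree : Module.IsTorsionFree R (M ⧸ LinearMap.range ι) := by
    rw [Module.isTorsionFree_iff_smul_eq_zero]
    intro k q hq
    obtain ⟨x, rfl⟩ := Submodule.Quotient.mk_surjective _ q
    rw [← Submodule.Quotient.mk_smul, Submodule.Quotient.mk_eq_zero] at hq
    exact or_iff_not_imp_left.2 fun hk => (Submodule.Quotient.mk_eq_zero _).2 (hsat k x hk hq)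
  have free : Module.Free R (M ⧸ LinearMap.range ι) := Module.free_of_finite_type_torsion_free'
  have quotient_splits := Module.projective_lifting_property (LinearMap.range ι).mkQ LinearMap.id
    (Submodule.mkQ_surjective _)
  have exact_mkQ : Function.Exact ι (LinearMap.range ι).mkQ :=
    LinearMap.exact_iff.2 (Submodule.ker_mkQ _)
  have split_iff := (exact_mkQ.split_tfae').out 0 1
  exact (split_iff.1 ⟨hinj, quotient_splits⟩).2

end Splitting

/-- Primitivity of an element of an arbitrary module: it is divisible only by units.
Over `ℤ` and in coordinates this follows from `IsPrimitive`, which refers to a basis. -/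
def IsIndivisible (R : Type*) {M : Type*} [Monoid R] [SMul R M] (x : M) : Prop :=
  ∀ ⦃g : R⦄ ⦃y : M⦄, g • y = x → IsUnit g

namespace IsIndivisible

variable {R L M : Type*} [CommRing R] [AddCommGroup L] [Module R L] [AddCommGroup M] [Module R M]

theorem map_of_comp_eq_id {ι : L →ₗ[R] M} {r : M →ₗ[R] L} (hr : r ∘ₗ ι = LinearMap.id) {x : L}
    (hx : IsIndivisible R x) : IsIndivisible R (ι x) := fun g z hz =>
  hx (y := r z) (by rw [← map_smul, hz, ← LinearMap.comp_apply, hr, LinearMap.id_apply])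

theorem isCoprime_of_eq_add [IsBezout R] {b d : R} {v w x : M} (hx : IsIndivisible R x)
    (h : x = b • v + d • w) : IsCoprime d b := by
  rw [← isRelPrime_iff_isCoprime]
  rintro g ⟨d', rfl⟩ ⟨b', rfl⟩
  exact hx (y := b' • v + d' • w) (by rw [h, smul_add, smul_smul, smul_smul])

end IsIndivisible

theorem IsPrimitive.isIndivisible {m : ℕ} {x : Fin m → ℤ} (hx : IsPrimitive x) :
    IsIndivisible ℤ x := by
  rintro g y rfl
  exact isUnit_of_dvd_one (hx ▸ Finset.dvd_gcd fun i _ => Dvd.intro (y i) rfl)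

/-- The Mukai form as a Mathlib bilinear form, equivalently as a map from `Λ̃` to its dual. -/
def mukaiBilin : LinearMap.BilinForm ℤ (Fin 8 → ℤ) :=
  LinearMap.mk₂ ℤ mukaiForm
    (fun _ _ _ => by simp only [mukaiForm, Pi.add_apply]; ring)
    (fun _ _ _ => by simp only [mukaiForm, Pi.smul_apply, smul_eq_mul]; ring)
    (fun _ _ _ => by simp only [mukaiForm, Pi.add_apply]; ring)
    (fun _ _ _ => by simp only [mukaiForm, Pi.smul_apply, smul_eq_mul]; ring)

theorem mukaiForm_eq_dotProduct (x y : Fin 8 → ℤ) :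
    mukaiForm x y = ![x 1, x 0, x 3, x 2, x 5, x 4, x 7, x 6] ⬝ᵥ y := by
  simp only [mukaiForm, dotProduct, Fin.sum_univ_eight, Matrix.cons_val]
  ring

theorem mukaiBilin_surjective : Function.Surjective mukaiBilin := by
  intro f
  obtain ⟨u, rfl⟩ := (dotProductEquiv ℤ (Fin 8)).surjective f
  refine ⟨![u 1, u 0, u 3, u 2, u 5, u 4, u 7, u 6], LinearMap.ext fun y => ?_⟩
  have swap_swap : ![u 0, u 1, u 2, u 3, u 4, u 5, u 6, u 7] = u := by
    ext i; fin_cases i <;> rfl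
  exact (mukaiForm_eq_dotProduct _ y).trans (congrArg (· ⬝ᵥ y) swap_swap)

theorem stmt4_general {R L M : Type*} [CommRing R] [IsBezout R] [AddCommGroup L] [Module R L]
    [Module.Projective R L] [AddCommGroup M] [Module R M] {C : LinearMap.BilinForm R M}
    (hC : Function.Surjective C) {ι : L →ₗ[R] M} (hι : ∃ r : M →ₗ[R] L, r ∘ₗ ι = LinearMap.id)
    {v : M} (hv : ∀ x, (∀ y, C x (ι y) = 0) → ∃ k : R, x = k • v)
    {α : L} (hα : IsIndivisible R α) {d : R} (hd : ∀ y, d ∣ C (ι α) (ι y)) :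
    ∃ b : R, IsCoprime d b ∧ ∃ w : M, ι α - b • v = d • w := by
  obtain ⟨r, hr⟩ := hι
  obtain ⟨w, hw⟩ := exists_map_sub_smul_eq_zero (D := ι.dualMap ∘ₗ C)
    ((dualMap_surjective_of_comp_eq_id hr).comp hC) hd
  obtain ⟨b, hb⟩ := hv (ι α - d • w) (LinearMap.congr_fun hw)
  have decomposition : ι α = b • v + d • w := sub_eq_iff_eq_add.1 hb
  exact ⟨b, (hα.map_of_comp_eq_id hr).isCoprime_of_eq_add decomposition, w,
    sub_eq_iff_eq_add'.2 decomposition⟩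

/-- There exists an integer `b` coprime to `d` such that `(ι(α) - b·v)/d` is an
integral element of the Mukai lattice. -/
theorem stmt4 (n : ℕ) (hn : 1 ≤ n) (ι : (Fin 7 → ℤ) →ₗ[ℤ] (Fin 8 → ℤ))
    (hι : IsPrimitiveIsometricEmbedding n ι) (v : Fin 8 → ℤ)
    (hv : ∀ x : Fin 8 → ℤ, (∀ y, mukaiForm x (ι y) = 0) ↔ ∃ k : ℤ, x = k • v)
    (α : Fin 7 → ℤ) (hprim : IsPrimitive α) (hiso : kummerForm n α α = 0)
    (d : ℤ) (hd : IsDivisibility (kummerForm n) α d) :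
    ∃ b : ℤ, IsCoprime d b ∧ ∃ w : Fin 8 → ℤ, ι α - b • v = d • w :=
  stmt4_general mukaiBilin_surjective (exists_comp_eq_id_of_saturated hι.1 hι.2.2)
    (fun x => (hv x).1) hprim.isIndivisible fun y =>
      (hd.2.1 y).trans (hι.2.1 α y).symm.dvd
end

section
/- Let n ≥ 1, let d > 0 with d² dividing n + 1, and let b be an integer with gcd(d,b) = 1. Then there exists a primitive isotropic element α of the generalized Kummer lattice Λ_n with Div(α) = d of the form α = d·ξ + b·δ, where ξ is a primitive element of the U^{⊕3} summand. -/
/-!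
Write `n + 1 = d² c`. Since `(dξ + bδ)² = d² ξ² - 2 (n + 1) b²`, isotropy of `α = dξ + bδ` amounts
to `ξ² = 2 c b²`, and `U` already contains primitive vectors of every even square. Unimodularity of
`U^{⊕3}` forces every common divisor of the pairings `(α, y)` to divide all the coordinates of `dξ`,
hence `d`.
-/

section Primitive

variable {m : ℕ} {x : Fin m → ℤ} {a b : ℤ}

lemma isPrimitive_of_forall_isUnit (h : ∀ g : ℤ, (∀ i, g ∣ x i) → IsUnit g) : IsPrimitive x := by
  have hunit : IsUnit (Finset.univ.gcd x) := h _ fun i => Finset.gcd_dvd (Finset.mem_univ i)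
  rw [IsPrimitive, ← Finset.normalize_gcd]
  exact normalize_eq_one.mpr hunit

lemma IsPrimitive.dvd_of_forall_dvd_mul (hx : IsPrimitive x) (h : ∀ i, b ∣ a * x i) : b ∣ a := by
  have hgcd : b ∣ Finset.univ.gcd fun i => a * x i := Finset.dvd_gcd fun i _ => h i
  rwa [Finset.gcd_mul_left, show Finset.univ.gcd x = 1 from hx, mul_one, dvd_normalize_iff] at hgcd

lemma IsPrimitive.smul_add_smul_single (hx : IsPrimitive x) {j : Fin m} (hj : x j = 0)
    (hab : IsCoprime a b) : IsPrimitive (a • x + b • Pi.single j 1) := by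
  refine isPrimitive_of_forall_isUnit fun g hg => ?_
  have hgb : g ∣ b := by simpa [hj] using hg j
  have hga : g ∣ a := hx.dvd_of_forall_dvd_mul fun i => by
    obtain rfl | hij := eq_or_ne i j
    · simp [hj]
    · simpa [hij] using hg i
  exact hab.isUnit_of_dvd' hga hgb

end Primitive

section KummerForm

variable (n : ℕ)

lemma kummerForm_smul_add_smul_single (a b : ℤ) (x y : Fin 7 → ℤ) :
    kummerForm n (a • x + b • Pi.single 6 1) y =
      a * kummerForm n x y - (2 * (n : ℤ) + 2) * (b * y 6) := by
  simp only [kummerForm, Pi.add_apply, Pi.smul_apply, smul_eq_mul, Pi.single_apply, Fin.reduceEq,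
    if_true, if_false]
  ring

lemma kummerForm_self_smul_add_smul_single (a b : ℤ) {x : Fin 7 → ℤ} (hx : x 6 = 0) :
    kummerForm n (a • x + b • Pi.single 6 1) (a • x + b • Pi.single 6 1) =
      a ^ 2 * kummerForm n x x - (2 * (n : ℤ) + 2) * b ^ 2 := by
  simp only [kummerForm, Pi.add_apply, Pi.smul_apply, smul_eq_mul, Pi.single_apply, Fin.reduceEq,
    if_true, if_false, hx]
  ring

lemma exists_forall_kummerForm_eq_apply {i : Fin 7} (hi : i ≠ 6) :
    ∃ y, ∀ x, kummerForm n x y = x i := by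
  refine ⟨Pi.single (![1, 0, 3, 2, 5, 4, 6] i) 1, fun x => ?_⟩
  fin_cases i <;> simp [kummerForm] at hi ⊢

lemma isDivisibility_smul_add_smul_single {d : ℤ} (b : ℤ) {x : Fin 7 → ℤ} (hd : 0 < d)
    (hdvd : d ∣ 2 * (n : ℤ) + 2) (hx : IsPrimitive x) (hx6 : x 6 = 0) :
    IsDivisibility (kummerForm n) (d • x + b • Pi.single 6 1) d := by
  refine ⟨hd, fun y => ?_, fun e he => hx.dvd_of_forall_dvd_mul fun i => ?_⟩
  · rw [kummerForm_smul_add_smul_single]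
    exact dvd_sub (dvd_mul_right _ _) (hdvd.mul_right _)
  · obtain rfl | hi := eq_or_ne i 6
    · simp [hx6]
    · obtain ⟨y, hy⟩ := exists_forall_kummerForm_eq_apply n hi
      simpa [hy, hi] using he y

lemma exists_isPrimitive_kummerForm_self_eq (k : ℤ) :
    ∃ x, IsPrimitive x ∧ x 6 = 0 ∧ kummerForm n x x = 2 * k := by
  refine ⟨![1, k, 0, 0, 0, 0, 0], ?_, rfl, ?_⟩
  · exact isPrimitive_of_forall_isUnit fun g hg => isUnit_of_dvd_one (hg 0)
  · simp only [kummerForm, Matrix.cons_val]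
    ring

end KummerForm

/-- For `d > 0` with `d² ∣ n+1` and `b` coprime to `d`, there exists a primitive
isotropic `α ∈ Λ_n` of divisibility `d` of the form `α = d·ξ + b·δ` with `ξ`
primitive in the `U^{⊕3}` summand (here `δ` is the seventh basis vector). -/
theorem stmt11 (n : ℕ) (hn : 1 ≤ n) (d b : ℤ) (hd : 0 < d)
    (hdiv : d ^ 2 ∣ (n : ℤ) + 1) (hcop : IsCoprime d b) :
    ∃ α ξ : Fin 7 → ℤ,
      IsPrimitive α ∧ kummerForm n α α = 0 ∧
      IsDivisibility (kummerForm n) α d ∧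
      IsPrimitive ξ ∧ ξ 6 = 0 ∧
      α = d • ξ + b • (fun i => if i = 6 then 1 else 0) := by
  obtain ⟨c, hc⟩ := hdiv
  obtain ⟨ξ, hξ, hξ6, hξξ⟩ := exists_isPrimitive_kummerForm_self_eq n (c * b ^ 2)
  have hdvd : d ∣ 2 * (n : ℤ) + 2 := ⟨2 * d * c, by linear_combination 2 * hc⟩
  refine ⟨d • ξ + b • Pi.single 6 1, ξ, hξ.smul_add_smul_single hξ6 hcop, ?_,
    isDivisibility_smul_add_smul_single n b hd hdvd hξ hξ6, hξ, hξ6, ?_⟩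
  · rw [kummerForm_self_smul_add_smul_single n d b hξ6, hξξ]
    linear_combination -2 * b ^ 2 * hc
  · simp only [← Pi.single_apply]
end

section
/- Let n ≥ 1 and let α₁, α₂ be primitive isotropic elements of the generalized Kummer lattice Λ_n with Div(α₁) = Div(α₂) = d. Write α_i = d·ξ_i + b_i·δ with ξ_i primitive in the U^{⊕3} summand and b_i ∈ ℤ. If b₁ ≡ b₂ (mod d) or b₁ ≡ −b₂ (mod d), then there exists an isometry g of Λ_n (a ℤ-linear automorphism of ℤ⁷ preserving the form) with g(α₁) = α₂. -/
/-!
Let `e, f` be a hyperbolic pair and let `u, v` be orthogonal to it, of equal norm, pairing to `d`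
with some vector each, and with `v - u = d b`. Eichler transvections along `e` carry `u` to
`u + d e` and `v` to `v + d e`, while the transvection along `f` with parameter `b` carries
`u + d e` to `v + d e`: no multiple of `f` appears because `u` and `v` have the same norm.

For `αᵢ = d ξᵢ + bᵢ δ`, to reach this situation, regard `U^{⊕3}` as `V* ⊕ V` with `V` of rank
three. Linear automorphisms of `V` act on it by isometries, and Bézout's identity provides one after
which a given `(φ, v) ∈ V* ⊕ V` is orthogonal to the hyperbolic plane of the last coordinate. The
sign ambiguity `b₁ ≡ -b₂` is absorbed by the isometry `-1`.
-/

section IsometryOrbits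

open QuadraticMap

variable {R M : Type*} [CommRing R] [AddCommGroup M] [Module R M] {Q : QuadraticForm R M}
  {u v w : M}

/-- `u` and `v` lie in the same orbit of the group of isometries of the quadratic form `Q`. -/
def SameIsometryOrbit (Q : QuadraticForm R M) (u v : M) : Prop :=
  ∃ g : Q.IsometryEquiv Q, g u = v

theorem polar_isometryEquiv (g : Q.IsometryEquiv Q) (x y : M) :
    polar Q (g x) (g y) = polar Q x y := by
  simp only [polar, ← map_add, IsometryEquiv.map_app]

namespace SameIsometryOrbit

theorem refl (Q : QuadraticForm R M) (u : M) : SameIsometryOrbit Q u u :=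
  ⟨.refl Q, rfl⟩

theorem symm (h : SameIsometryOrbit Q u v) : SameIsometryOrbit Q v u :=
  let ⟨g, hg⟩ := h
  ⟨g.symm, g.symm_apply_eq.mpr hg.symm⟩

theorem trans (huv : SameIsometryOrbit Q u v) (hvw : SameIsometryOrbit Q v w) :
    SameIsometryOrbit Q u w :=
  let ⟨g, hg⟩ := huv
  let ⟨h, hh⟩ := hvw
  ⟨g.trans h, (congrArg h hg).trans hh⟩

theorem neg_right (Q : QuadraticForm R M) (u : M) : SameIsometryOrbit Q u (-u) :=
  ⟨{ LinearEquiv.neg R with map_app' := Q.map_neg }, rfl⟩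

theorem map_eq (h : SameIsometryOrbit Q u v) : Q u = Q v := by
  obtain ⟨g, rfl⟩ := h
  exact (g.map_app u).symm

theorem exists_polar_eq {d : R} (h : SameIsometryOrbit Q u v) (hu : ∃ y, polar Q u y = d) :
    ∃ y, polar Q v y = d := by
  obtain ⟨g, rfl⟩ := h
  obtain ⟨y, hy⟩ := hu
  exact ⟨g y, (polar_isometryEquiv g u y).trans hy⟩

end SameIsometryOrbit

end IsometryOrbits

section EichlerTransvections

open QuadraticMap

variable {R M : Type*} [CommRing R] [AddCommGroup M] [Module R M] {Q : QuadraticForm R M}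
  {a b e f u v : M} {d : R}

/-- The linear map `x ↦ x + (e, x) a - ((a, x) + Q(a) (e, x)) e` underlying the Eichler
transvection, where `(·, ·)` is the polar form of `Q`. It is an isometry when `e` is isotropic and
orthogonal to `a`. -/
def eichlerMap (Q : QuadraticForm R M) (e a : M) : M →ₗ[R] M :=
  LinearMap.id + (Q.polarBilin e).smulRight a
    - (Q.polarBilin a + Q a • Q.polarBilin e).smulRight e

theorem eichlerMap_apply (e a x : M) :
    eichlerMap Q e a x = x + polar Q e x • a - (polar Q a x + Q a * polar Q e x) • e := by
  simp [eichlerMap]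

theorem map_eichlerMap (he : Q e = 0) (hea : polar Q e a = 0) (x : M) :
    Q (eichlerMap Q e a x) = Q x := by
  have hae : polar Q a e = 0 := polar_comm Q e a ▸ hea
  rw [eichlerMap_apply, sub_eq_add_neg, QuadraticMap.map_add Q, QuadraticMap.map_add Q]
  simp only [QuadraticMap.map_neg, QuadraticMap.map_smul, polar_neg_right, polar_smul_right,
    polar_add_left, polar_smul_left, smul_eq_mul, he, hae, polar_comm Q x]
  ring

theorem eichlerMap_neg_eichlerMap (he : Q e = 0) (hea : polar Q e a = 0) (x : M) :
    eichlerMap Q e (-a) (eichlerMap Q e a x) = x := by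
  have hae : polar Q a e = 0 := polar_comm Q e a ▸ hea
  have hee : polar Q e e = 0 := by rw [polar_self, he, smul_zero]
  simp only [eichlerMap_apply, polar_add_right, polar_sub_right, polar_smul_right, polar_neg_left,
    polar_self, QuadraticMap.map_neg, hea, hae, hee, smul_eq_mul, nsmul_eq_mul]
  module

/-- The Eichler transvection along the isotropic vector `e` with parameter `a ∈ e^⊥`, as an
isometry; its inverse is the transvection with parameter `-a`. -/
def eichlerTransvection (he : Q e = 0) (hea : polar Q e a = 0) : Q.IsometryEquiv Q where
  toLinearEquiv := .ofLinearMap (eichlerMap Q e a) (eichlerMap Q e (-a))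
    (LinearMap.ext fun x => by
      simpa using eichlerMap_neg_eichlerMap he (a := -a) (by simpa using hea) x)
    (LinearMap.ext <| eichlerMap_neg_eichlerMap he hea)
  map_app' := map_eichlerMap he hea

theorem eichlerTransvection_apply (he : Q e = 0) (hea : polar Q e a = 0) (x : M) :
    eichlerTransvection he hea x
      = x + polar Q e x • a - (polar Q a x + Q a * polar Q e x) • e :=
  eichlerMap_apply e a x

/-- `e` and `f` form the standard basis of a hyperbolic plane. -/
structure IsHyperbolicPair (Q : QuadraticForm R M) (e f : M) : Prop where
  map_left : Q e = 0
  map_right : Q f = 0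
  polar_eq_one : polar Q e f = 1

namespace IsHyperbolicPair

theorem sameIsometryOrbit_add_smul (h : IsHyperbolicPair Q e f) (hue : polar Q u e = 0)
    (huf : polar Q u f = 0) (hd : ∃ y, polar Q u y = d) :
    SameIsometryOrbit Q u (u + d • e) := by
  obtain ⟨y, rfl⟩ := hd
  have hea : polar Q e (polar Q e y • f - y) = 0 := by
    simp [polar_sub_right, polar_smul_right, h.polar_eq_one]
  refine ⟨eichlerTransvection h.map_left hea, ?_⟩
  rw [eichlerTransvection_apply, polar_comm Q e u, hue, polar_comm Q _ u, polar_sub_right,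
    polar_smul_right, huf]
  module

theorem sameIsometryOrbit_add_smul_add_smul (h : IsHyperbolicPair Q e f)
    (hue : polar Q u e = 0) (huf : polar Q u f = 0) (hve : polar Q v e = 0)
    (hvf : polar Q v f = 0) (hQ : Q u = Q v) (hd : IsLeftRegular d) (hb : v - u = d • b) :
    SameIsometryOrbit Q (u + d • e) (v + d • e) := by
  obtain rfl : v = u + d • b := by rw [← hb, add_sub_cancel]
  have polar_b {x : M} (hu : polar Q u x = 0) (hv : polar Q (u + d • b) x = 0) :
      polar Q b x = 0 := by
    rw [polar_add_left, hu, zero_add, polar_smul_left, smul_eq_mul] at hv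
    exact hd.mul_left_eq_zero_iff.mp hv
  have hfb : polar Q f b = 0 := polar_comm Q f b ▸ polar_b huf hvf
  have hnorm : polar Q b u + Q b * d = 0 := by
    rw [QuadraticMap.map_add Q, QuadraticMap.map_smul, polar_smul_right, polar_comm] at hQ
    refine hd.mul_left_eq_zero_iff.mp ?_
    simp only [smul_eq_mul] at hQ
    linear_combination -hQ
  have hfx : polar Q f (u + d • e) = d := by
    rw [polar_add_right, polar_smul_right, polar_comm Q f u, huf, polar_comm Q f e, h.polar_eq_one,
      zero_add, smul_eq_mul, mul_one]
  have hbx : polar Q b (u + d • e) = polar Q b u := by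
    rw [polar_add_right, polar_smul_right, polar_b hue hve, smul_zero, add_zero]
  refine ⟨eichlerTransvection h.map_right hfb, ?_⟩
  rw [eichlerTransvection_apply, hfx, hbx, hnorm]
  module

theorem sameIsometryOrbit_of_sub_eq_smul (h : IsHyperbolicPair Q e f)
    (hue : polar Q u e = 0) (huf : polar Q u f = 0) (hve : polar Q v e = 0)
    (hvf : polar Q v f = 0) (hQ : Q u = Q v) (hd : IsLeftRegular d)
    (hu : ∃ y, polar Q u y = d) (hv : ∃ y, polar Q v y = d) (hb : v - u = d • b) :
    SameIsometryOrbit Q u v :=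
  (h.sameIsometryOrbit_add_smul hue huf hu).trans <|
    (h.sameIsometryOrbit_add_smul_add_smul hue huf hve hvf hQ hd hb).trans
      (h.sameIsometryOrbit_add_smul hve hvf hv).symm

end IsHyperbolicPair

end EichlerTransvections

section BezoutDomains

open Module

variable {R : Type*} [CommRing R]

/-- The automorphism of `R²` given by the matrix with rows `(p, q)` and `(r, s)`. -/
def planeEquiv (p q r s : R) (h : p * s - q * r = 1) : (R × R) ≃ₗ[R] R × R where
  toFun x := (p * x.1 + q * x.2, r * x.1 + s * x.2)
  invFun x := (s * x.1 - q * x.2, p * x.2 - r * x.1)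
  map_add' x y := by ext <;> simp <;> ring
  map_smul' c x := by ext <;> simp <;> ring
  left_inv x := by
    ext
    · linear_combination x.1 * h
    · linear_combination x.2 * h
  right_inv x := by
    ext
    · linear_combination x.1 * h
    · linear_combination x.2 * h

variable [IsDomain R] [IsBezout R]

theorem exists_det_eq_one_and_mul_add_mul_eq_zero (u v : R) :
    ∃ p q r s : R, p * s - q * r = 1 ∧ r * u + s * v = 0 := by
  obtain ⟨p, q, hpq⟩ := IsBezout.gcd_eq_sum u v
  obtain ⟨u', hu⟩ := IsBezout.gcd_dvd_left u v
  obtain ⟨v', hv⟩ := IsBezout.gcd_dvd_right u v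
  rcases eq_or_ne (IsBezout.gcd u v) 0 with h | h
  · exact ⟨1, 0, 0, 1, by ring, by rw [hv, h]; ring⟩
  · refine ⟨p, q, -v', u', mul_left_cancel₀ h ?_, ?_⟩
    · linear_combination hpq - p * hu - q * hv
    · linear_combination u' * hv - v' * hu

theorem exists_linearEquiv_snd_eq_zero (w : R × R) :
    ∃ g : (R × R) ≃ₗ[R] R × R, (g w).2 = 0 :=
  let ⟨p, q, r, s, hdet, hw⟩ := exists_det_eq_one_and_mul_add_mul_eq_zero w.1 w.2
  ⟨planeEquiv p q r s hdet, hw⟩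

theorem exists_linearEquiv_dual_symm_eq_zero (φ : Dual R (R × R)) :
    ∃ g : (R × R) ≃ₗ[R] R × R, φ (g.symm (0, 1)) = 0 := by
  obtain ⟨p, q, r, s, hdet, hφ⟩ :=
    exists_det_eq_one_and_mul_add_mul_eq_zero (φ (1, 0)) (φ (0, 1))
  let g := planeEquiv p r q s (by linear_combination hdet)
  have hg : g (0, 1) = r • (1, 0) + s • (0, 1) := by simp [g, planeEquiv]
  refine ⟨g.symm, ?_⟩
  rw [LinearEquiv.symm_symm, hg, map_add, map_smul, map_smul]
  exact hφ

theorem exists_linearEquiv_tail_eq_zero (v : R × R × R) :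
    ∃ g : (R × R × R) ≃ₗ[R] R × R × R, (g v).2 = 0 := by
  obtain ⟨g, hg⟩ := exists_linearEquiv_snd_eq_zero v.2
  obtain ⟨h, hh⟩ := exists_linearEquiv_snd_eq_zero (v.1, (g v.2).1)
  exact ⟨(LinearEquiv.refl R R).prodCongr g ≪≫ₗ (LinearEquiv.prodAssoc R R R R).symm ≪≫ₗ
    h.prodCongr (.refl R R) ≪≫ₗ LinearEquiv.prodAssoc R R R R, Prod.ext hh hg⟩

theorem exists_linearEquiv_dual_symm_eq_zero_and_last_eq_zero
    (φ : Dual R (R × R × R)) (v : R × R × R) :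
    ∃ g : (R × R × R) ≃ₗ[R] R × R × R, φ (g.symm (0, 0, 1)) = 0 ∧ (g v).2.2 = 0 := by
  obtain ⟨g, hg⟩ := exists_linearEquiv_tail_eq_zero v
  obtain ⟨h, hh⟩ := exists_linearEquiv_dual_symm_eq_zero
    (φ ∘ₗ g.symm.toLinearMap ∘ₗ LinearMap.inr R R (R × R))
  exact ⟨g ≪≫ₗ (LinearEquiv.refl R R).prodCongr h, hh, by simp [hg]⟩

end BezoutDomains

section ThreeHyperbolicPlanes

open QuadraticMap QuadraticForm Module

variable {R L : Type*} [CommRing R] [AddCommGroup L] [Module R L] {Q₀ : QuadraticForm R L}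

/-- The quadratic form `U^{⊕3} ⊕ Q₀`, with `U^{⊕3}` realized as the evaluation pairing on
`V* ⊕ V` for `V = R³`, so that automorphisms of `V` act on it by isometries. -/
abbrev addThreeHyperbolicPlanes (Q₀ : QuadraticForm R L) :
    QuadraticForm R ((Dual R (R × R × R) × R × R × R) × L) :=
  (dualProd R (R × R × R)).prod Q₀

theorem polar_addThreeHyperbolicPlanes (x y : (Dual R (R × R × R) × R × R × R) × L) :
    polar (addThreeHyperbolicPlanes Q₀) x y
      = x.1.1 y.1.2 + y.1.1 x.1.2 + polar Q₀ x.2 y.2 := by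
  rw [polar_prod]
  simp only [polar, dualProd_apply, Prod.fst_add, Prod.snd_add, LinearMap.add_apply, map_add]
  ring

theorem isHyperbolicPair_last (Q₀ : QuadraticForm R L) :
    IsHyperbolicPair (addThreeHyperbolicPlanes Q₀) ((0, 0, 0, 1), 0)
      ((LinearMap.snd R R R ∘ₗ LinearMap.snd R R (R × R), 0), 0) where
  map_left := by simp
  map_right := by simp
  polar_eq_one := by rw [polar_addThreeHyperbolicPlanes]; simp

variable [IsDomain R] [IsBezout R] {d : R} {ξ₁ ξ₂ : Dual R (R × R × R) × R × R × R} {z₁ z₂ c : L}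

theorem exists_sameIsometryOrbit_last_eq_zero (Q₀ : QuadraticForm R L)
    (ξ : Dual R (R × R × R) × R × R × R) :
    ∃ η : Dual R (R × R × R) × R × R × R, η.1 (0, 0, 1) = 0 ∧ η.2.2.2 = 0 ∧
      ∀ (d : R) (z : L),
        SameIsometryOrbit (addThreeHyperbolicPlanes Q₀) (d • ξ, z) (d • η, z) := by
  obtain ⟨g, hφ, hv⟩ := exists_linearEquiv_dual_symm_eq_zero_and_last_eq_zero ξ.1 ξ.2
  exact ⟨dualProdIsometry g ξ, hφ, hv, fun d z =>
    ⟨(dualProdIsometry g).prod (.refl Q₀), Prod.ext (map_smul (dualProdIsometry g) d ξ) rfl⟩⟩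

theorem sameIsometryOrbit_of_sub_eq_smul (hz : z₂ - z₁ = d • c)
    (hQ : addThreeHyperbolicPlanes Q₀ (d • ξ₁, z₁) = addThreeHyperbolicPlanes Q₀ (d • ξ₂, z₂))
    (h₁ : ∃ y, polar (addThreeHyperbolicPlanes Q₀) (d • ξ₁, z₁) y = d)
    (h₂ : ∃ y, polar (addThreeHyperbolicPlanes Q₀) (d • ξ₂, z₂) y = d) :
    SameIsometryOrbit (addThreeHyperbolicPlanes Q₀) (d • ξ₁, z₁) (d • ξ₂, z₂) := by
  rcases eq_or_ne d 0 with rfl | hd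
  · obtain rfl : z₁ = z₂ := by simpa [sub_eq_zero, eq_comm] using hz
    simpa using SameIsometryOrbit.refl (addThreeHyperbolicPlanes Q₀) (0, z₁)
  obtain ⟨η₁, hφ₁, hv₁, hη₁⟩ := exists_sameIsometryOrbit_last_eq_zero Q₀ ξ₁
  obtain ⟨η₂, hφ₂, hv₂, hη₂⟩ := exists_sameIsometryOrbit_last_eq_zero Q₀ ξ₂
  specialize hη₁ d z₁
  specialize hη₂ d z₂
  refine hη₁.trans (.trans ?_ hη₂.symm)
  refine (isHyperbolicPair_last Q₀).sameIsometryOrbit_of_sub_eq_smul (b := (η₂ - η₁, c))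
    ?_ ?_ ?_ ?_ (hη₁.map_eq.symm.trans (hQ.trans hη₂.map_eq)) (IsRegular.of_ne_zero hd).left
    (hη₁.exists_polar_eq h₁) (hη₂.exists_polar_eq h₂) ?_
  · rw [polar_addThreeHyperbolicPlanes]; simp [hφ₁]
  · rw [polar_addThreeHyperbolicPlanes]; simp [hv₁]
  · rw [polar_addThreeHyperbolicPlanes]; simp [hφ₂]
  · rw [polar_addThreeHyperbolicPlanes]; simp [hv₂]
  · simp [hz, smul_sub]

theorem sameIsometryOrbit_of_add_eq_smul (hz : z₂ + z₁ = d • c)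
    (hQ : addThreeHyperbolicPlanes Q₀ (d • ξ₁, z₁) = addThreeHyperbolicPlanes Q₀ (d • ξ₂, z₂))
    (h₁ : ∃ y, polar (addThreeHyperbolicPlanes Q₀) (d • ξ₁, z₁) y = d)
    (h₂ : ∃ y, polar (addThreeHyperbolicPlanes Q₀) (d • ξ₂, z₂) y = d) :
    SameIsometryOrbit (addThreeHyperbolicPlanes Q₀) (d • ξ₁, z₁) (d • ξ₂, z₂) := by
  have hneg : SameIsometryOrbit (addThreeHyperbolicPlanes Q₀) (d • ξ₁, z₁) (d • -ξ₁, -z₁) := by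
    simpa [smul_neg] using SameIsometryOrbit.neg_right (addThreeHyperbolicPlanes Q₀) (d • ξ₁, z₁)
  exact hneg.trans <| sameIsometryOrbit_of_sub_eq_smul (by rwa [sub_neg_eq_add])
    (hneg.map_eq.symm.trans hQ) (hneg.exists_polar_eq h₁) h₂

end ThreeHyperbolicPlanes

section KummerLattice

open QuadraticMap Module

variable {n : ℕ}

/-- The quadratic form `x ↦ (x, x) / 2` of the generalized Kummer lattice, in the model
`V* ⊕ V ⊕ ℤδ` with `V = ℤ³`. -/
abbrev kummerQuadraticForm (n : ℕ) :
    QuadraticForm ℤ ((Dual ℤ (ℤ × ℤ × ℤ) × ℤ × ℤ × ℤ) × ℤ) :=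
  addThreeHyperbolicPlanes (-(n + 1 : ℤ) • QuadraticMap.sq)

/-- The identification of `ℤ⁷` with `V* ⊕ V ⊕ ℤδ`: the three hyperbolic planes are spanned by the
coordinates `(0, 1)`, `(2, 3)`, `(4, 5)`, the even ones belonging to `V*`. -/
def kummerEquiv : (Fin 7 → ℤ) ≃ₗ[ℤ] (Dual ℤ (ℤ × ℤ × ℤ) × ℤ × ℤ × ℤ) × ℤ where
  toFun x :=
    (((x 0 • LinearMap.id).coprod ((x 2 • LinearMap.id).coprod (x 4 • LinearMap.id)),
      x 1, x 3, x 5), x 6)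
  invFun y :=
    ![y.1.1 (1, 0, 0), y.1.2.1, y.1.1 (0, 1, 0), y.1.2.2.1, y.1.1 (0, 0, 1), y.1.2.2.2, y.2]
  map_add' x y := by ext <;> simp
  map_smul' c x := by ext <;> simp
  left_inv x := by ext i; fin_cases i <;> simp
  right_inv y := by ext <;> simp [← Prod.mk_zero_zero]

theorem polar_kummerEquiv (x y : Fin 7 → ℤ) :
    polar (kummerQuadraticForm n) (kummerEquiv x) (kummerEquiv y) = kummerForm n x y := by
  rw [polar_addThreeHyperbolicPlanes]
  simp only [kummerEquiv, kummerForm, polar, LinearEquiv.coe_mk, LinearMap.coe_mk, AddHom.coe_mk,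
    LinearMap.coprod_apply, LinearMap.id_apply, smul_apply, LinearMap.smul_apply, sq_apply,
    smul_eq_mul]
  ring

theorem map_kummerEquiv_eq_iff {x y : Fin 7 → ℤ} :
    kummerQuadraticForm n (kummerEquiv x) = kummerQuadraticForm n (kummerEquiv y) ↔
      kummerForm n x x = kummerForm n y y := by
  rw [← polar_kummerEquiv, ← polar_kummerEquiv, polar_self, polar_self]
  simp

theorem kummerEquiv_smul_add_smul {ξ : Fin 7 → ℤ} (hξ : ξ 6 = 0) (d b : ℤ) :
    kummerEquiv (d • ξ + b • (fun i => if i = 6 then 1 else 0)) = (d • (kummerEquiv ξ).1, b) := by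
  ext <;> simp [kummerEquiv, hξ]

theorem IsPrimitive.exists_sum_mul_eq_one {m : ℕ} {x : Fin m → ℤ} (hx : IsPrimitive x) :
    ∃ c : Fin m → ℤ, ∑ i, x i * c i = 1 :=
  let ⟨c, hc⟩ := Finset.univ.gcd_eq_sum_mul x
  ⟨c, hc.symm.trans hx⟩

theorem exists_polar_kummerQuadraticForm_eq {ξ : Fin 7 → ℤ} (hξp : IsPrimitive ξ) (hξ : ξ 6 = 0)
    (d b : ℤ) :
    ∃ y, polar (kummerQuadraticForm n) (d • (kummerEquiv ξ).1, b) y = d := by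
  obtain ⟨c, hc⟩ := hξp.exists_sum_mul_eq_one
  refine ⟨kummerEquiv ![c 1, c 0, c 3, c 2, c 5, c 4, 0], ?_⟩
  rw [Fin.sum_univ_seven, hξ] at hc
  rw [← kummerEquiv_smul_add_smul hξ, polar_kummerEquiv]
  simp only [kummerForm, Pi.add_apply, Pi.smul_apply, smul_eq_mul, Fin.reduceEq, ↓reduceIte,
    Matrix.cons_val, hξ]
  linear_combination d * hc

theorem exists_linearEquiv_kummerForm_of_sameIsometryOrbit {x y : Fin 7 → ℤ}
    (h : SameIsometryOrbit (kummerQuadraticForm n) (kummerEquiv x) (kummerEquiv y)) :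
    ∃ g : (Fin 7 → ℤ) ≃ₗ[ℤ] (Fin 7 → ℤ),
      (∀ x y, kummerForm n (g x) (g y) = kummerForm n x y) ∧ g x = y := by
  obtain ⟨g, hg⟩ := h
  refine ⟨kummerEquiv ≪≫ₗ g.toLinearEquiv ≪≫ₗ kummerEquiv.symm, fun x y => ?_, ?_⟩
  · simp [← polar_kummerEquiv, polar_isometryEquiv]
  · simp [hg]

end KummerLattice

theorem stmt12_general (n : ℕ) (d : ℤ) (α₁ α₂ ξ₁ ξ₂ : Fin 7 → ℤ) (b₁ b₂ : ℤ)
    (hnorm : kummerForm n α₁ α₁ = kummerForm n α₂ α₂)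
    (hξ₁p : IsPrimitive ξ₁) (hξ₁ : ξ₁ 6 = 0)
    (hξ₂p : IsPrimitive ξ₂) (hξ₂ : ξ₂ 6 = 0)
    (hα₁ : α₁ = d • ξ₁ + b₁ • (fun i => if i = 6 then 1 else 0))
    (hα₂ : α₂ = d • ξ₂ + b₂ • (fun i => if i = 6 then 1 else 0))
    (hcong : d ∣ b₁ - b₂ ∨ d ∣ b₁ + b₂) :
    ∃ g : (Fin 7 → ℤ) ≃ₗ[ℤ] (Fin 7 → ℤ),
      (∀ x y, kummerForm n (g x) (g y) = kummerForm n x y) ∧ g α₁ = α₂ := by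
  apply exists_linearEquiv_kummerForm_of_sameIsometryOrbit
  have hQ := map_kummerEquiv_eq_iff.mpr hnorm
  have h₁ := exists_polar_kummerQuadraticForm_eq (n := n) hξ₁p hξ₁ d b₁
  have h₂ := exists_polar_kummerQuadraticForm_eq (n := n) hξ₂p hξ₂ d b₂
  rw [hα₁, hα₂, kummerEquiv_smul_add_smul hξ₁, kummerEquiv_smul_add_smul hξ₂] at hQ ⊢
  rcases hcong with hsub | ⟨k, hk⟩
  · obtain ⟨k, hk⟩ := dvd_sub_comm.mp hsub
    exact sameIsometryOrbit_of_sub_eq_smul hk hQ h₁ h₂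
  · exact sameIsometryOrbit_of_add_eq_smul ((add_comm b₂ b₁).trans hk) hQ h₁ h₂

/-- Let `α₁, α₂` be primitive isotropic in `Λ_n` of common divisibility `d`,
written `αᵢ = d·ξᵢ + bᵢ·δ` with `ξᵢ` primitive in the `U^{⊕3}` summand. If
`b₁ ≡ b₂ (mod d)` or `b₁ ≡ -b₂ (mod d)`, then some isometry of `Λ_n` maps `α₁`
to `α₂`. -/
theorem stmt12 (n : ℕ) (hn : 1 ≤ n) (d : ℤ)
    (α₁ α₂ ξ₁ ξ₂ : Fin 7 → ℤ) (b₁ b₂ : ℤ)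
    (h1p : IsPrimitive α₁) (h2p : IsPrimitive α₂)
    (h1i : kummerForm n α₁ α₁ = 0) (h2i : kummerForm n α₂ α₂ = 0)
    (h1d : IsDivisibility (kummerForm n) α₁ d)
    (h2d : IsDivisibility (kummerForm n) α₂ d)
    (hξ₁p : IsPrimitive ξ₁) (hξ₁ : ξ₁ 6 = 0)
    (hξ₂p : IsPrimitive ξ₂) (hξ₂ : ξ₂ 6 = 0)
    (hα₁ : α₁ = d • ξ₁ + b₁ • (fun i => if i = 6 then 1 else 0))
    (hα₂ : α₂ = d • ξ₂ + b₂ • (fun i => if i = 6 then 1 else 0))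
    (hcong : d ∣ b₁ - b₂ ∨ d ∣ b₁ + b₂) :
    ∃ g : (Fin 7 → ℤ) ≃ₗ[ℤ] (Fin 7 → ℤ),
      (∀ x y, kummerForm n (g x) (g y) = kummerForm n x y) ∧ g α₁ = α₂ :=
  stmt12_general n d α₁ α₂ ξ₁ ξ₂ b₁ b₂ (h1i.trans h2i.symm) hξ₁p hξ₁ hξ₂p hξ₂ hα₁ hα₂ hcong
end

section
/- Let n ≥ 1, let ι : Λ_n → Λ̃ be a primitive isometric embedding of the generalized Kummer lattice into the Mukai lattice, let v be a generator of the rank-1 orthogonal complement ι(Λ_n)^⊥, and let g be an isometry of Λ_n for which there exists an isometry g̃ of Λ̃ with ι ∘ g = g̃ ∘ ι. Then for every primitive isotropic α ∈ Λ_n there exists a group isomorphism h : H(α,ι) → H(g(α),ι) preserving the restricted bilinear forms such that h(v) = v or h(v) = −v. -/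
/-- The saturation of the subgroup of `ℤ^m` generated by a set `s`:
all `x` with `k • x` in the span of `s` for some nonzero integer `k`. -/
def satSpan {m : ℕ} (s : Set (Fin m → ℤ)) : Submodule ℤ (Fin m → ℤ) where
  carrier := {x | ∃ k : ℤ, k ≠ 0 ∧ k • x ∈ Submodule.span ℤ s}
  add_mem' := by
    rintro x y ⟨k, hk, hkx⟩ ⟨l, hl, hly⟩
    refine ⟨k * l, mul_ne_zero hk hl, ?_⟩
    have h : (k * l) • (x + y) = l • (k • x) + k • (l • y) := by
      rw [smul_add, mul_comm k l, mul_smul, mul_comm l k, mul_smul]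
    rw [h]
    exact Submodule.add_mem _ (Submodule.smul_mem _ _ hkx)
      (Submodule.smul_mem _ _ hly)
  zero_mem' := ⟨1, one_ne_zero, by simp⟩
  smul_mem' := by
    rintro c x ⟨k, hk, hkx⟩
    exact ⟨k, hk, by rw [smul_comm]; exact Submodule.smul_mem _ c hkx⟩

/-!
The isomorphism is the restriction of `g̃`. As `g̃` is an isometry mapping `ι(Λ_n)` onto itself,
it also maps `ι(Λ_n)^⊥ = ℤv` onto itself, so `g̃ v` is again a generator of `ℤv`, that is
`g̃ v = ±v`. Hence `g̃` carries the span of `ι α` and `v` to the span of `g̃ (ι α) = ι (g α)` and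
`v`, and a linear automorphism commutes with saturation.
-/

section Saturation

variable {m : ℕ} {s t : Set (Fin m → ℤ)}

theorem subset_satSpan (s : Set (Fin m → ℤ)) : s ⊆ satSpan s := fun x hx =>
  ⟨1, one_ne_zero, (one_smul ℤ x).symm ▸ Submodule.subset_span hx⟩

theorem satSpan_eq_of_span_eq (h : Submodule.span ℤ s = Submodule.span ℤ t) :
    satSpan s = satSpan t :=
  Submodule.ext fun _ => exists_congr fun _ => and_congr_right fun _ => by rw [h]

theorem map_satSpan (f : (Fin m → ℤ) ≃ₗ[ℤ] (Fin m → ℤ)) (s : Set (Fin m → ℤ)) :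
    (satSpan s).map (f : (Fin m → ℤ) →ₗ[ℤ] (Fin m → ℤ)) = satSpan (f '' s) := by
  ext x
  have smul_mem_span_iff (k : ℤ) :
      k • f.symm x ∈ Submodule.span ℤ s ↔ k • x ∈ Submodule.span ℤ (f '' s) := by
    rw [← map_smul, ← Submodule.mem_map_equiv, Submodule.map_span, LinearEquiv.coe_coe]
  rw [Submodule.mem_map_equiv]
  exact exists_congr fun k => and_congr_right fun _ => smul_mem_span_iff k

end Saturation

section Orthogonal

variable {M N A : Type*} [Zero A]

/-- The left orthogonal complement `S^⊥` of a set `S`. The pairing `B` is an arbitrary function,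
because `mukaiForm` is not bundled as a bilinear map. -/
def leftOrthogonal (B : M → M → A) (S : Set M) : Set M :=
  {x | ∀ y ∈ S, B x y = 0}

theorem image_leftOrthogonal {B : M → M → A} {C : N → N → A} (f : M ≃ N)
    (hf : ∀ x y, C (f x) (f y) = B x y) (S : Set M) :
    f '' leftOrthogonal B S = leftOrthogonal C (f '' S) := by
  ext x
  obtain ⟨x, rfl⟩ := f.surjective x
  simp only [f.injective.mem_set_image, leftOrthogonal, Set.mem_ofPred_eq,
    Set.forall_mem_image, hf]

theorem span_singleton_apply_eq_of_leftOrthogonal_eq_span {R : Type*} [Semiring R]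
    [AddCommMonoid M] [Module R M] {B : M → M → A} (f : M ≃ₗ[R] M)
    (hf : ∀ x y, B (f x) (f y) = B x y) {S : Set M} (hS : f '' S = S) {v : M}
    (hv : leftOrthogonal B S = Submodule.span R {v}) :
    Submodule.span R {f v} = Submodule.span R {v} := by
  apply SetLike.coe_injective
  calc (Submodule.span R {f v} : Set M)
      = f '' Submodule.span R {v} := by
        rw [← Set.image_singleton, Submodule.span_image_linearEquiv, Submodule.map_coe,
          LinearEquiv.coe_coe]
    _ = f '' leftOrthogonal B S := by rw [hv]
    _ = leftOrthogonal B (f '' S) := image_leftOrthogonal f.toEquiv hf S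
    _ = Submodule.span R {v} := by rw [hS, hv]

end Orthogonal

theorem eq_or_eq_neg_of_span_singleton_eq {M : Type*} [AddCommGroup M] [IsAddTorsionFree M]
    {x y : M} (h : Submodule.span ℤ {x} = Submodule.span ℤ {y}) : x = y ∨ x = -y := by
  obtain ⟨u, rfl⟩ := Submodule.span_singleton_eq_span_singleton.1 h.symm
  rcases Int.units_eq_one_or u with rfl | rfl
  · exact .inl (one_smul _ y)
  · exact .inr (by rw [Units.neg_smul, one_smul])

theorem stmt18_general {m : ℕ} {Λ A : Type*} [Zero A]
    (B : (Fin m → ℤ) → (Fin m → ℤ) → A) (ι : Λ → Fin m → ℤ) (v : Fin m → ℤ)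
    (hv : ∀ x, (∀ y, B x (ι y) = 0) ↔ ∃ k : ℤ, x = k • v)
    (g : Λ → Λ) (hg : Function.Surjective g)
    (gt : (Fin m → ℤ) ≃ₗ[ℤ] (Fin m → ℤ)) (hgt : ∀ x y, B (gt x) (gt y) = B x y)
    (hcomp : Function.Semiconj ι g gt) (α : Λ) :
    ∃ (hm₁ : v ∈ satSpan {ι α, v}) (hm₂ : v ∈ satSpan {ι (g α), v})
      (h : satSpan {ι α, v} ≃ₗ[ℤ] satSpan {ι (g α), v}),
      (∀ x y : satSpan {ι α, v}, B (h x).1 (h y).1 = B x.1 y.1) ∧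
      (h ⟨v, hm₁⟩ = ⟨v, hm₂⟩ ∨ h ⟨v, hm₁⟩ = -⟨v, hm₂⟩) := by
  have image_range : gt '' Set.range ι = Set.range ι :=
    (hcomp.surjOn_range hg).image_eq_of_mapsTo hcomp.mapsTo_range
  have orthogonal_range : leftOrthogonal B (Set.range ι) = Submodule.span ℤ {v} := by
    ext x
    simp only [leftOrthogonal, Set.mem_ofPred_eq, Set.forall_mem_range, hv, SetLike.mem_coe,
      Submodule.mem_span_singleton, eq_comm]
  have span_apply : Submodule.span ℤ {gt v} = Submodule.span ℤ {v} :=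
    span_singleton_apply_eq_of_leftOrthogonal_eq_span gt hgt image_range orthogonal_range
  have map_eq : (satSpan {ι α, v}).map (gt : (Fin m → ℤ) →ₗ[ℤ] (Fin m → ℤ))
      = satSpan {ι (g α), v} := by
    rw [map_satSpan, Set.image_pair, ← hcomp α]
    apply satSpan_eq_of_span_eq
    rw [Submodule.span_insert, span_apply, ← Submodule.span_insert]
  refine ⟨subset_satSpan _ (.inr rfl), subset_satSpan _ (.inr rfl),
    gt.ofSubmodules _ _ map_eq, fun x y => hgt x y, ?_⟩
  exact (eq_or_eq_neg_of_span_singleton_eq span_apply).imp Subtype.ext Subtype.ext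

/-- If `g` is an isometry of `Λ_n` that extends along `ι` to an isometry `g̃` of
the Mukai lattice (`ι ∘ g = g̃ ∘ ι`), and `v` generates `ι(Λ_n)^⊥`, then for
every primitive isotropic `α ∈ Λ_n` there is an isomorphism
`H(α,ι) → H(g(α),ι)` preserving the restricted forms and fixing `v` up to sign. -/
theorem stmt18 (n : ℕ) (hn : 1 ≤ n)
    (ι : (Fin 7 → ℤ) →ₗ[ℤ] (Fin 8 → ℤ))
    (hι : IsPrimitiveIsometricEmbedding n ι)
    (v : Fin 8 → ℤ)
    (hv : ∀ x : Fin 8 → ℤ, (∀ y, mukaiForm x (ι y) = 0) ↔ ∃ k : ℤ, x = k • v)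
    (g : (Fin 7 → ℤ) ≃ₗ[ℤ] (Fin 7 → ℤ))
    (hgiso : ∀ x y, kummerForm n (g x) (g y) = kummerForm n x y)
    (gt : (Fin 8 → ℤ) ≃ₗ[ℤ] (Fin 8 → ℤ))
    (hgt : ∀ x y, mukaiForm (gt x) (gt y) = mukaiForm x y)
    (hcomp : ∀ x, ι (g x) = gt (ι x))
    (α : Fin 7 → ℤ) (hprim : IsPrimitive α) (hiso : kummerForm n α α = 0) :
    ∃ (hm₁ : v ∈ satSpan {ι α, v}) (hm₂ : v ∈ satSpan {ι (g α), v})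
      (h : satSpan {ι α, v} ≃ₗ[ℤ] satSpan {ι (g α), v}),
      (∀ x y : satSpan {ι α, v}, mukaiForm (h x).1 (h y).1 =
        mukaiForm x.1 y.1) ∧
      (h ⟨v, hm₁⟩ = ⟨v, hm₂⟩ ∨ h ⟨v, hm₁⟩ = -⟨v, hm₂⟩) :=
  stmt18_general mukaiForm ι v hv g g.surjective gt hgt hcomp α
end
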